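/- Let 1 < q < ∞, let Ω ⊆ ℝⁿ be an open set, and let w, a be weights with w·a^ε ∈ L¹_loc(Ω) for all ε ∈ (0, q−1) and a ∈ L^q(Ω,w). If w ∈ A_q and a^δ ∈ A_q for some δ > 0, then the generalized grand Sobolev space W^{1,q)}_a(Ω,w), equipped with its norm, is a Banach space (in particular it is complete). -/

import Mathlib

/-!
The heart of the matter is that, for one small exponent `ε₀ > 0`, the space `L^{q-ε₀}(w a^{ε₀})`
embeds into `L¹` on bounded sets. Granted this, completeness follows the classical pattern. A
rapidly Cauchy subsequence of functions and gradients converges almost everywhere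
(`exists_ae_limit`, in the single space with exponent `ε₀`). Since the measures `w a^ε dx` share
their null sets with Lebesgue measure on `Ω`,
the lemma of Fatou (`eLpNorm_le_of_tendsto`) applies to
every `ε` at once and shows that the original sequence converges to this limit in the grand norm.
The embedding makes the convergence take place in `L¹` on compact subsets of `Ω`, and so the weak
gradient identity passes to the limit (`tendsto_integral_mul_test`).

By the Hölder inequality (`lintegral_le_weighted`) the embedding amounts to local integrability of
`(w a^ε)^{-1/(q-ε-1)}`. The exponent of `w` here is slightly more negative than the
`-1/(q-1)` supplied by `w ∈ A_q`, so the dual weight `σ = w^{-1/(q-1)}` must be shown to have a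
little more integrability, `σ^{1+η} ∈ L¹_loc`; the small power of `a⁻¹` is then absorbed using the
dual weight of `a^δ` (`exists_dual_integrable`).

The higher integrability of `σ` is the Coifman–Fefferman argument on dyadic cubes. The `A_q`
condition and the Hölder inequality show that a subset filling at most half of a cube carries at most
a fraction `β < 1` of its `σ`-mass (`exists_mass_ratio`). Stopping-time decompositions at
geometrically increasing levels (`IsNestedPartition.stopping`) then make the `σ`-mass of the level
sets of the dyadic maximal function decay geometrically, and summing over the levels gives a
convergent series for `∫ σ^{1+η}` (`higher_integrability`). That argument is carried out for an
abstract nested sequence of partitions, and then specialised to dyadic cubes in `Fin n → ℝ`, whose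
closures are the balls of the sup norm (`higher_integrability_cubes`).
-/

open MeasureTheory Metric Set ENNReal

/-- The weighted Lebesgue norm `‖f‖_{L^p(Ω,v)} = (∫_Ω |f|^p v dx)^{1/p}`. -/
noncomputable def wLqNorm {n : ℕ} (p : ℝ) (v : EuclideanSpace ℝ (Fin n) → ℝ)
    (Ω : Set (EuclideanSpace ℝ (Fin n))) (f : EuclideanSpace ℝ (Fin n) → ℝ) : ℝ≥0∞ :=
  (∫⁻ x in Ω, ENNReal.ofReal |f x| ^ p * ENNReal.ofReal (v x)) ^ (1 / p)

/-- The generalized grand Lebesgue norm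
`‖f‖_{L^{q)}_a(Ω,w)} = sup_{0<ε<q−1} (ε ∫_Ω |f|^{q−ε} w a^ε dx)^{1/(q−ε)}`. -/
noncomputable def grandNorm {n : ℕ} (q : ℝ) (w a : EuclideanSpace ℝ (Fin n) → ℝ)
    (Ω : Set (EuclideanSpace ℝ (Fin n))) (f : EuclideanSpace ℝ (Fin n) → ℝ) : ℝ≥0∞ :=
  ⨆ (ε : ℝ) (_ : ε ∈ Set.Ioo (0 : ℝ) (q - 1)),
    (ENNReal.ofReal ε *
      ∫⁻ x in Ω, ENNReal.ofReal |f x| ^ (q - ε) * ENNReal.ofReal (w x * a x ^ ε))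
        ^ (1 / (q - ε))

/-- The axis-parallel cube with center `c` and half edge-length `r`. -/
def axisCube {n : ℕ} (c : EuclideanSpace ℝ (Fin n)) (r : ℝ) :
    Set (EuclideanSpace ℝ (Fin n)) :=
  {x | ∀ i, |x i - c i| ≤ r}

/-- The Muckenhoupt class `A_q(ℝⁿ)`:
`sup_Q (fQ w) (fQ w^{−1/(q−1)})^{q−1} < ∞` over axis-parallel cubes `Q`. -/
def MemAq {n : ℕ} (q : ℝ) (w : EuclideanSpace ℝ (Fin n) → ℝ) : Prop :=
  ∃ C : ℝ≥0∞, C ≠ ⊤ ∧ ∀ (c : EuclideanSpace ℝ (Fin n)) (r : ℝ), 0 < r →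
    ((volume (axisCube c r))⁻¹ * ∫⁻ x in axisCube c r, ENNReal.ofReal (w x)) *
      ((volume (axisCube c r))⁻¹ *
        ∫⁻ x in axisCube c r, ENNReal.ofReal (w x ^ (-(1 / (q - 1))))) ^ (q - 1) ≤ C


/-- `gf : Ω → ℝⁿ` is a weak gradient of `f : Ω → ℝ` on an open set `Ω ⊆ ℝⁿ`. -/
def IsWeakGradOn {n : ℕ} (f : EuclideanSpace ℝ (Fin n) → ℝ)
    (gf : EuclideanSpace ℝ (Fin n) → EuclideanSpace ℝ (Fin n))
    (Ω : Set (EuclideanSpace ℝ (Fin n))) : Prop :=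
  LocallyIntegrableOn f Ω volume ∧ LocallyIntegrableOn gf Ω volume ∧
    ∀ φ : EuclideanSpace ℝ (Fin n) → ℝ, ContDiff ℝ (⊤ : ℕ∞) φ → HasCompactSupport φ →
      tsupport φ ⊆ Ω → ∀ k : Fin n,
        ∫ x in Ω, f x * fderiv ℝ φ x (EuclideanSpace.single k 1)
          = - ∫ x in Ω, gf x k * φ x

/-- The generalized grand Sobolev norm
`‖f‖_{W^{1,q)}_a(Ω,w)} = sup_{0<ε<q−1} ε^{1/(q−ε)} ‖f‖_{W^{1,q−ε}(Ω,wa^ε)}`, where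
`‖f‖_{W^{1,p}(Ω,v)} = ‖f‖_{L^p(Ω,v)} + ‖∇f‖_{L^p(Ω,v)}` and `gf = ∇f`. -/
noncomputable def grandSobNormW {n : ℕ} (q : ℝ) (w a : EuclideanSpace ℝ (Fin n) → ℝ)
    (Ω : Set (EuclideanSpace ℝ (Fin n))) (f : EuclideanSpace ℝ (Fin n) → ℝ)
    (gf : EuclideanSpace ℝ (Fin n) → EuclideanSpace ℝ (Fin n)) : ℝ≥0∞ :=
  ⨆ (ε : ℝ) (_ : ε ∈ Set.Ioo (0 : ℝ) (q - 1)),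
    ENNReal.ofReal (ε ^ (1 / (q - ε))) *
      (wLqNorm (q - ε) (fun x => w x * a x ^ ε) Ω f +
        wLqNorm (q - ε) (fun x => w x * a x ^ ε) Ω (fun x => ‖gf x‖))

/-! ### Self-improvement of integrability for nested partitions -/

/-- The cell of generation `m` containing `x`: all points carrying the same label `idx m` as `x`. -/
def cell {X ι : Type*} (idx : ℕ → X → ι) (m : ℕ) (x : X) : Set X := {y | idx m y = idx m x}

/-- Labels `idx m : X → ι` describing a decreasing sequence of countable measurable partitions of
`X`: the cells of generation `m + 1` refine those of generation `m`. -/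
structure IsNestedPartition {X ι : Type*} [MeasurableSpace X] (idx : ℕ → X → ι) : Prop where
  meas : ∀ m x, MeasurableSet (cell idx m x)
  nest : ∀ m x y, idx (m + 1) x = idx (m + 1) y → idx m x = idx m y

namespace IsNestedPartition

variable {X ι : Type*} [MeasurableSpace X] {idx : ℕ → X → ι}

lemma nest_le (h : IsNestedPartition idx) {j m : ℕ} (hjm : j ≤ m) {x y : X}
    (hxy : idx m x = idx m y) : idx j x = idx j y := by
  induction m, hjm using Nat.le_induction with
  | base => exact hxy
  | succ m _ ih => exact ih (h.nest m x y hxy)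

lemma cell_subset (h : IsNestedPartition idx) {j m : ℕ} (hjm : j ≤ m) (x : X) :
    cell idx m x ⊆ cell idx j x := fun _ hy => h.nest_le hjm hy

/-- A set of the form `{x | ∃ j, P j x}`, with `P j` constant on the cells of generation `j`, is a
countable disjoint union of the cells on which `P` happens for the first time. Hence a comparison
of two measures on these cells gives the same comparison on the whole set. -/
lemma stopping (h : IsNestedPartition idx) [Countable ι] (P : ℕ → X → Prop)
    (hP : ∀ j x y, idx j x = idx j y → P j x → P j y) :
    MeasurableSet {x | ∃ j, P j x} ∧ ∀ μ₁ μ₂ : Measure X,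
      (∀ j x, P j x → (∀ i < j, ¬ P i x) → μ₁ (cell idx j x) ≤ μ₂ (cell idx j x)) →
      μ₁ {x | ∃ j, P j x} ≤ μ₂ {x | ∃ j, P j x} := by
  classical
  let T : ℕ × ι → Set X := fun p => {x | idx p.1 x = p.2 ∧ P p.1 x ∧ ∀ i < p.1, ¬ P i x}
  have hT : ∀ p, ∀ x ∈ T p, T p = cell idx p.1 x := by
    rintro ⟨j, i⟩ x ⟨hx1, hx2, hx3⟩
    ext y
    constructor
    · rintro ⟨hy1, -, -⟩
      exact hy1.trans hx1.symm
    · intro hy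
      have hy' : idx j y = idx j x := hy
      refine ⟨hy'.trans hx1, hP j x y hy'.symm hx2, fun l hl hPl => hx3 l hl ?_⟩
      exact hP l y x (h.nest_le hl.le hy') hPl
  have hTm : ∀ p, MeasurableSet (T p) := by
    intro p
    rcases (T p).eq_empty_or_nonempty with h0 | ⟨x, hx⟩
    · rw [h0]; exact MeasurableSet.empty
    · rw [hT p x hx]; exact h.meas _ _
  have hdisj : Pairwise (Function.onFun Disjoint T) := by
    rintro ⟨j, i⟩ ⟨j', i'⟩ hne
    refine Set.disjoint_left.2 ?_
    rintro x ⟨h1, h2, h3⟩ ⟨h1', h2', h3'⟩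
    simp only at h1 h2 h3 h1' h2' h3'
    apply hne
    have hjj : j = j' := by
      rcases lt_trichotomy j j' with hlt | heq | hgt
      · exact absurd h2 (h3' j hlt)
      · exact heq
      · exact absurd h2' (h3 j' hgt)
    subst hjj
    rw [← h1, ← h1']
  have hU : {x | ∃ j, P j x} = ⋃ p, T p := by
    ext x
    simp only [Set.mem_ofPred_eq, Set.mem_iUnion]
    constructor
    · intro hx
      exact ⟨(Nat.find hx, idx (Nat.find hx) x), rfl, Nat.find_spec hx,
        fun i hi => Nat.find_min hx hi⟩
    · rintro ⟨p, -, hp, -⟩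
      exact ⟨p.1, hp⟩
  refine ⟨hU ▸ MeasurableSet.iUnion hTm, fun μ₁ μ₂ hμ => ?_⟩
  rw [hU, measure_iUnion hdisj hTm, measure_iUnion hdisj hTm]
  refine ENNReal.tsum_le_tsum fun p => ?_
  rcases (T p).eq_empty_or_nonempty with h0 | ⟨x, hx⟩
  · simp [h0]
  · rw [hT p x hx]
    exact hμ _ _ hx.2.1 hx.2.2

end IsNestedPartition

lemma exists_rpow_mul_lt_one {R β : ℝ≥0∞} (hR1 : 1 ≤ R) (hR : R ≠ ⊤) (hβ : β < 1) :
    ∃ η : ℝ, 0 < η ∧ R ^ η * β < 1 := by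
  lift R to NNReal using hR
  lift β to NNReal using hβ.ne_top
  have hR0 : R ≠ 0 := by
    rintro rfl
    simp at hR1
  have hc : Filter.Tendsto (fun η : ℝ => R ^ η * β) (nhds 0) (nhds (R ^ (0 : ℝ) * β)) := by
    have : ContinuousAt (fun η : ℝ => R ^ η) 0 :=
      (NNReal.continuousAt_rpow (x := R) (y := 0) (Or.inl hR0)).comp
        (f := fun η : ℝ => (R, η)) (by fun_prop)
    exact this.tendsto.mul_const β
  have hlt : R ^ (0 : ℝ) * β < 1 := by
    simpa using hβ
  have hev : ∀ᶠ η : ℝ in nhdsWithin 0 (Set.Ioi 0), R ^ η * β < 1 :=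
    (hc.eventually (gt_mem_nhds hlt)).filter_mono nhdsWithin_le_nhds
  obtain ⟨η, h1, h2⟩ := (hev.and self_mem_nhdsWithin).exists
  refine ⟨η, h2, ?_⟩
  rw [← ENNReal.coe_rpow_of_ne_zero hR0]
  exact_mod_cast h1

/-- Self-improvement of integrability for a nested partition with the doubling constant `A`: if
`ν = σ μ` gives mass at most `β ν(D)`, `β < 1`, to those parts of a cell `D` that fill at most half
of it, then `σ ^ (1 + η)` is `μ`-integrable on the cells of generation `0` for some `η > 0`. -/
theorem higher_integrability {X ι : Type*} [MeasurableSpace X] [Countable ι] {idx : ℕ → X → ι}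
    (h : IsNestedPartition idx) (μ : Measure X) (σ : X → ℝ≥0∞) (hσ : Measurable σ)
    (A β : ℝ≥0∞) (hA1 : 1 ≤ A) (hA : A ≠ ⊤) (hβ : β < 1)
    (hμ0 : ∀ m x, μ (cell idx m x) ≠ 0) (hμt : ∀ m x, μ (cell idx m x) ≠ ⊤)
    (hdoub : ∀ m x, μ (cell idx m x) ≤ A * μ (cell idx (m + 1) x))
    (hν : ∀ x, (μ.withDensity σ) (cell idx 0 x) ≠ ⊤)
    (hinf : ∀ m x E, MeasurableSet E → E ⊆ cell idx m x → μ E ≤ 2⁻¹ * μ (cell idx m x) →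
      (μ.withDensity σ) E ≤ β * (μ.withDensity σ) (cell idx m x))
    (hdiff : ∀ x₀, ∀ᵐ x ∂μ, x ∈ cell idx 0 x₀ → ∀ L : ℝ≥0∞,
      (∀ m, (μ.withDensity σ) (cell idx m x) ≤ L * μ (cell idx m x)) → σ x ≤ L) :
    ∃ η : ℝ, 0 < η ∧ ∀ x₀, ∫⁻ x in cell idx 0 x₀, σ x ^ (1 + η) ∂μ < ⊤ := by
  set ν := μ.withDensity σ with hνdef
  set R : ℝ≥0∞ := 2 * A with hRdef
  have hR1 : 1 ≤ R := by
    calc (1 : ℝ≥0∞) = 1 * 1 := by simp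
      _ ≤ 2 * A := mul_le_mul' (by norm_num) hA1
  have hRt : R ≠ ⊤ := ENNReal.mul_ne_top (by simp) hA
  obtain ⟨η, hη, hηβ⟩ := exists_rpow_mul_lt_one hR1 hRt hβ
  refine ⟨η, hη, fun x₀ => ?_⟩
  set D₀ := cell idx 0 x₀ with hD₀
  set l₀ : ℝ≥0∞ := ν D₀ / μ D₀ + 1 with hl₀
  have hl₀t : l₀ ≠ ⊤ := by
    simp [hl₀, ENNReal.div_eq_top, hμ0 0 x₀, hν x₀, hD₀]
  have hl₀0 : l₀ ≠ 0 := by simp [hl₀]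
  -- Levels growing by the factor `R = 2 * A`: doubling costs `A` between a stopping cell and its
  -- parent, and the remaining factor `2` makes the next stopping set fill at most half of it.
  let l : ℕ → ℝ≥0∞ := fun k => l₀ * R ^ k
  have hl0 : ∀ k, l k ≠ 0 := fun k =>
    mul_ne_zero hl₀0 (pow_ne_zero _ (zero_lt_one.trans_le hR1).ne')
  have hlt : ∀ k, l k ≠ ⊤ := fun k => ENNReal.mul_ne_top hl₀t (ENNReal.pow_ne_top hRt)
  have hlmono : ∀ k, l₀ ≤ l k := fun k => by
    calc l₀ = l₀ * 1 := by simp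
      _ ≤ l₀ * R ^ k := by gcongr; exact one_le_pow₀ hR1
  have hlsucc : ∀ k, l (k + 1) = R * l k := fun k => by
    simp only [l, pow_succ]; ring
  have hcell : ∀ {m : ℕ} {x y : X}, idx m x = idx m y → cell idx m x = cell idx m y := by
    intro m x y hxy
    ext z
    simp [cell, hxy]
  -- `Ω k` is the set where the dyadic maximal function of `σ` over `D₀` exceeds `l k`.
  let P : ℕ → ℕ → X → Prop := fun k j x =>
    x ∈ D₀ ∧ l k * μ (cell idx j x) < ν (cell idx j x)
  have hPinv : ∀ k j x y, idx j x = idx j y → P k j x → P k j y := by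
    rintro k j x y hxy ⟨h1, h2⟩
    refine ⟨?_, ?_⟩
    · have := h.nest_le (Nat.zero_le j) hxy
      exact this.symm.trans h1
    · rwa [← hcell hxy]
  let Ω : ℕ → Set X := fun k => {x | ∃ j, P k j x}
  have hΩm : ∀ k, MeasurableSet (Ω k) := fun k => (h.stopping (P k) (hPinv k)).1
  have hΩD : ∀ k, Ω k ⊆ D₀ := fun k x ⟨_, hx⟩ => hx.1
  have hΩanti : ∀ k, Ω (k + 1) ⊆ Ω k := by
    rintro k x ⟨j, hx1, hx2⟩
    refine ⟨j, hx1, lt_of_le_of_lt ?_ hx2⟩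
    gcongr
    rw [hlsucc]
    calc l k = 1 * l k := by simp
      _ ≤ R * l k := by gcongr
  -- Weak type bound inside a stopping cell: `Ω (k + 1)` fills at most half of it.
  have hhalf : ∀ k j x, P k j x → (∀ i < j, ¬ P k i x) →
      μ (Ω (k + 1) ∩ cell idx j x) ≤ 2⁻¹ * μ (cell idx j x) := by
    intro k j x hx hmin
    have hj0 : j ≠ 0 := by
      rintro rfl
      have h1 : cell idx 0 x = D₀ := hcell hx.1
      have h2 := hx.2
      rw [h1] at h2
      have h3 : ν D₀ ≤ l k * μ D₀ := by
        calc ν D₀ = ν D₀ / μ D₀ * μ D₀ := by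
              rw [ENNReal.div_mul_cancel (hμ0 0 x₀) (hμt 0 x₀)]
          _ ≤ l k * μ D₀ := by
              gcongr
              exact le_trans (by simp [hl₀]) (hlmono k)
      exact absurd h2 (not_lt.2 h3)
    obtain ⟨i, rfl⟩ := Nat.exists_eq_succ_of_ne_zero hj0
    have hup : ν (cell idx (i + 1) x) ≤ A * l k * μ (cell idx (i + 1) x) := by
      have h1 : ν (cell idx i x) ≤ l k * μ (cell idx i x) := by
        by_contra hcon
        exact hmin i (Nat.lt_succ_self i) ⟨hx.1, not_le.1 hcon⟩
      calc ν (cell idx (i + 1) x) ≤ ν (cell idx i x) :=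
            measure_mono (h.cell_subset (Nat.le_succ i) x)
        _ ≤ l k * μ (cell idx i x) := h1
        _ ≤ l k * (A * μ (cell idx (i + 1) x)) := by gcongr; exact hdoub i x
        _ = _ := by ring
    set j := i + 1 with hj
    let Q : ℕ → X → Prop := fun j' y =>
      idx j y = idx j x ∧ j ≤ j' ∧ l (k + 1) * μ (cell idx j' y) < ν (cell idx j' y)
    have hQinv : ∀ j' y z, idx j' y = idx j' z → Q j' y → Q j' z := by
      rintro j' y z hyz ⟨h1, h2, h3⟩
      exact ⟨(h.nest_le h2 hyz).symm.trans h1, h2, by rwa [← hcell hyz]⟩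
    have hsub : Ω (k + 1) ∩ cell idx j x ⊆ {y | ∃ j', Q j' y} := by
      rintro y ⟨⟨j', hy1, hy2⟩, hy3⟩
      have hy3' : idx j y = idx j x := hy3
      rcases le_or_gt j j' with hle | hgt
      · exact ⟨j', hy3', hle, hy2⟩
      · exfalso
        refine hmin j' hgt ⟨hx.1, ?_⟩
        rw [← hcell (h.nest_le hgt.le hy3')]
        refine lt_of_le_of_lt ?_ hy2
        gcongr
        rw [hlsucc]
        calc l k = 1 * l k := by simp
          _ ≤ R * l k := by gcongr
    have hst := (h.stopping Q hQinv).2 (l (k + 1) • μ) ν (by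
      intro j' y hy _
      simpa using hy.2.2.le)
    have hQsub : {y | ∃ j', Q j' y} ⊆ cell idx j x := fun y ⟨_, hy⟩ => hy.1
    have h1 : l (k + 1) * μ (Ω (k + 1) ∩ cell idx j x)
        ≤ l (k + 1) * (2⁻¹ * μ (cell idx j x)) := by
      calc l (k + 1) * μ (Ω (k + 1) ∩ cell idx j x)
          ≤ l (k + 1) * μ {y | ∃ j', Q j' y} := by gcongr
        _ ≤ ν {y | ∃ j', Q j' y} := by simpa using hst
        _ ≤ ν (cell idx j x) := measure_mono hQsub
        _ ≤ A * l k * μ (cell idx j x) := hup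
        _ = (2 * 2⁻¹) * A * l k * μ (cell idx j x) := by
            rw [ENNReal.mul_inv_cancel (by simp) (by simp), one_mul]
        _ = l (k + 1) * (2⁻¹ * μ (cell idx j x)) := by
            rw [hlsucc, hRdef]; ring
    exact (ENNReal.mul_le_mul_iff_right (hl0 _) (hlt _)).1 h1
  have hstep : ∀ k, ν (Ω (k + 1)) ≤ β * ν (Ω k) := by
    intro k
    have hst := (h.stopping (P k) (hPinv k)).2 (ν.restrict (Ω (k + 1))) (β • ν) (by
      intro j x hx hmin
      rw [Measure.restrict_apply (h.meas _ _), Set.inter_comm, Measure.smul_apply, smul_eq_mul]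
      exact hinf j x _ ((hΩm _).inter (h.meas _ _)) Set.inter_subset_right
        (hhalf k j x hx hmin))
    have h2 : (ν.restrict (Ω (k + 1))) (Ω k) ≤ (β • ν) (Ω k) := hst
    rw [Measure.restrict_apply (hΩm k), Set.inter_eq_right.2 (hΩanti k), Measure.smul_apply,
      smul_eq_mul] at h2
    exact h2
  have hpow : ∀ k, ν (Ω k) ≤ β ^ k * ν D₀ := by
    intro k
    induction k with
    | zero => simpa using measure_mono (hΩD 0)
    | succ k ih =>
      calc ν (Ω (k + 1)) ≤ β * ν (Ω k) := hstep k
        _ ≤ β * (β ^ k * ν D₀) := by gcongr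
        _ = _ := by rw [pow_succ]; ring
  have hnull : ν (⋂ k, Ω k) = 0 := by
    have ht : Filter.Tendsto (fun k : ℕ => β ^ k * ν D₀) Filter.atTop (nhds (0 * ν D₀)) :=
      ENNReal.Tendsto.mul_const (ENNReal.tendsto_pow_atTop_nhds_zero_of_lt_one hβ)
        (Or.inr (hν x₀))
    rw [zero_mul] at ht
    refine le_antisymm (ge_of_tendsto' ht fun k => ?_) bot_le
    exact (measure_mono (Set.iInter_subset _ k)).trans (hpow k)
  have hνμ : ν ≪ μ := withDensity_absolutelyContinuous μ σ
  -- By differentiation `σ ≤ l k` off `Ω k`, and the sets `Ω k` shrink to a null set.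
  have hpt : ∀ᵐ x ∂(ν.restrict D₀), σ x ^ η ≤
      l 0 ^ η + ∑' k, (Ω k).indicator (fun _ => l (k + 1) ^ η) x := by
    have h1 : ∀ᵐ x ∂ν, x ∉ ⋂ k, Ω k := measure_eq_zero_iff_ae_notMem.1 hnull
    rw [ae_restrict_iff' (h.meas 0 x₀)]
    filter_upwards [h1, hνμ.ae_le (hdiff x₀)] with x hx1 hx2 hxD
    have hbd : ∀ k, x ∉ Ω k → σ x ≤ l k := by
      intro k hk
      refine hx2 hxD (l k) fun m => ?_
      by_contra hcon
      exact hk ⟨m, hxD, not_le.1 hcon⟩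
    classical
    have hex : ∃ k, x ∉ Ω k := by simpa using hx1
    rcases hk : Nat.find hex with _ | k
    · have := Nat.find_spec hex
      rw [hk] at this
      exact le_add_right (ENNReal.rpow_le_rpow (hbd 0 this) hη.le)
    · have hn := Nat.find_spec hex
      rw [hk] at hn
      have hy : x ∈ Ω k := by
        by_contra hcon
        exact Nat.find_min hex (m := k) (by omega) hcon
      refine le_add_left (le_trans ?_ (ENNReal.le_tsum k))
      rw [Set.indicator_of_mem hy]
      exact ENNReal.rpow_le_rpow (hbd _ hn) hη.le
  have hconv : ∫⁻ x in D₀, σ x ^ (1 + η) ∂μ = ∫⁻ x in D₀, σ x ^ η ∂ν := by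
    rw [hνdef, restrict_withDensity (h.meas 0 x₀), lintegral_withDensity_eq_lintegral_mul _ hσ
      (hσ.pow_const η)]
    refine lintegral_congr fun x => ?_
    rw [ENNReal.rpow_add_of_nonneg 1 η zero_le_one hη.le, ENNReal.rpow_one]
    rfl
  rw [hconv]
  calc ∫⁻ x in D₀, σ x ^ η ∂ν
      ≤ ∫⁻ x in D₀, (l 0 ^ η + ∑' k, (Ω k).indicator (fun _ => l (k + 1) ^ η) x) ∂ν :=
        lintegral_mono_ae hpt
    _ ≤ l 0 ^ η * ν D₀ + ∑' k, l (k + 1) ^ η * ν (Ω k) := by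
        rw [lintegral_add_left measurable_const, lintegral_const,
          lintegral_tsum fun k => (measurable_const.indicator (hΩm k)).aemeasurable]
        simp only [Measure.restrict_apply MeasurableSet.univ, Set.univ_inter]
        gcongr with k
        rw [lintegral_indicator (hΩm k), lintegral_const]
        simp only [Measure.restrict_apply MeasurableSet.univ, Set.univ_inter]
        gcongr
        exact Measure.restrict_le_self
    _ ≤ l 0 ^ η * ν D₀ + ∑' k : ℕ, (R ^ η * β) ^ k * ((l₀ * R) ^ η * ν D₀) := by
        refine add_le_add le_rfl (ENNReal.tsum_le_tsum fun k => ?_)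
        calc l (k + 1) ^ η * ν (Ω k) ≤ l (k + 1) ^ η * (β ^ k * ν D₀) := by
              gcongr; exact hpow k
          _ = (R ^ η * β) ^ k * ((l₀ * R) ^ η * ν D₀) := by
              have h1 : l (k + 1) = R ^ k * (l₀ * R) := by simp only [l, pow_succ]; ring
              have h2 : (R ^ k) ^ η = (R ^ η) ^ k := by
                rw [← ENNReal.rpow_natCast, ← ENNReal.rpow_natCast, ← ENNReal.rpow_mul,
                  ← ENNReal.rpow_mul, mul_comm]
              rw [h1, ENNReal.mul_rpow_of_nonneg _ _ hη.le, mul_pow (R ^ η) β k, h2]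
              ring
    _ < ⊤ := by
        rw [ENNReal.tsum_mul_right, ENNReal.tsum_geometric]
        refine ENNReal.add_lt_top.2 ⟨ENNReal.mul_lt_top
          (ENNReal.rpow_lt_top_of_nonneg hη.le (hlt 0)) (hν x₀).lt_top,
          ENNReal.mul_lt_top ?_ (ENNReal.mul_lt_top
          (ENNReal.rpow_lt_top_of_nonneg hη.le (ENNReal.mul_ne_top hl₀t hRt)) (hν x₀).lt_top)⟩
        rw [ENNReal.inv_lt_top]
        exact tsub_pos_of_lt hηβ

/-! ### Muckenhoupt weights on dyadic cubes -/

/-- The passage from a Muckenhoupt condition to the comparison of relative masses: if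
`W(Q) σ(Q)^(q-1) ≤ C μ(Q)^q` and `1 ≤ W σ^(q-1)`, a subset filling at most half of `Q` carries at
most the fraction `β < 1` of its `σ`-mass, where `β` depends only on `C` and `q`. -/
lemma exists_mass_ratio {X : Type*} [MeasurableSpace X] (μ : Measure X) (W σ : X → ℝ≥0∞)
    (hW : Measurable W) (hσ : Measurable σ) {q : ℝ} (hq : 1 < q) {C : ℝ≥0∞} (hC : C ≠ ⊤)
    (hWσ : ∀ᵐ x ∂μ, 1 ≤ W x * σ x ^ (q - 1)) :
    ∃ β : ℝ≥0∞, β < 1 ∧ ∀ Q, MeasurableSet Q → μ Q ≠ 0 → μ Q ≠ ⊤ →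
      ∫⁻ x in Q, σ x ∂μ ≠ ⊤ →
      (∫⁻ x in Q, W x ∂μ) * (∫⁻ x in Q, σ x ∂μ) ^ (q - 1) ≤ C * μ Q ^ q →
      ∀ E, MeasurableSet E → E ⊆ Q → μ E ≤ 2⁻¹ * μ Q →
        ∫⁻ x in E, σ x ∂μ ≤ β * ∫⁻ x in Q, σ x ∂μ := by
  have hq0 : 0 < q := by linarith
  set θ : ℝ := (q - 1) / q with hθ
  have hθ0 : 0 < θ := div_pos (by linarith) hq0
  set L : ℝ≥0∞ := (2 * C ^ (1 / q)) ^ (1 / θ) + 1 with hL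
  have hLt : L ≠ ⊤ := by
    refine ENNReal.add_ne_top.2 ⟨?_, by simp⟩
    refine ENNReal.rpow_ne_top_of_nonneg (by positivity) (ENNReal.mul_ne_top (by simp) ?_)
    exact ENNReal.rpow_ne_top_of_nonneg (by positivity) hC
  have hL1 : 1 ≤ L := le_add_left le_rfl
  have hL0 : L ≠ 0 := (zero_lt_one.trans_le hL1).ne'
  refine ⟨1 - L⁻¹, ENNReal.sub_lt_self (by simp) (by simp) (ENNReal.inv_ne_zero.2 hLt), ?_⟩
  intro Q hQ hQ0 hQt hσQ hAq E hE hEQ hEhalf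
  set F := Q \ E with hF
  have hFm : MeasurableSet F := hQ.diff hE
  have hFQ : F ⊆ Q := Set.sdiff_subset
  have hholder : μ F ≤ (∫⁻ x in F, W x ∂μ) ^ (1 / q) * (∫⁻ x in F, σ x ∂μ) ^ θ := by
    calc μ F = ∫⁻ x in F, 1 ∂μ := by simp
      _ ≤ ∫⁻ x in F, W x ^ (1 / q) * σ x ^ θ ∂μ := by
          refine lintegral_mono_ae (ae_restrict_of_ae ?_)
          filter_upwards [hWσ] with x hx
          calc (1 : ℝ≥0∞) ≤ (W x * σ x ^ (q - 1)) ^ (1 / q) :=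
                ENNReal.one_le_rpow hx (by positivity)
            _ = W x ^ (1 / q) * σ x ^ θ := by
                rw [ENNReal.mul_rpow_of_nonneg _ _ (by positivity), ← ENNReal.rpow_mul, hθ]
                congr 2
                ring
      _ ≤ _ := by
          refine ENNReal.lintegral_mul_norm_pow_le hW.aemeasurable hσ.aemeasurable
            (by positivity) hθ0.le ?_
          rw [hθ]; field_simp; ring
  have hmeas : μ Q ≤ 2 * μ F := by
    have h1 : μ Q = μ E + μ F := by
      rw [hF, measure_sdiff hEQ hE.nullMeasurableSet (ne_top_of_le_ne_top hQt (measure_mono hEQ)),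
        add_tsub_cancel_of_le (measure_mono hEQ)]
    have h2 : μ Q ≤ 2⁻¹ * μ Q + μ F := by
      conv_lhs => rw [h1]
      gcongr
    have h3 : 2⁻¹ * μ Q + 2⁻¹ * μ Q = μ Q := by
      rw [← add_mul, ENNReal.inv_two_add_inv_two, one_mul]
    have h4 : 2⁻¹ * μ Q ≤ μ F := by
      have h5 : 2⁻¹ * μ Q + 2⁻¹ * μ Q ≤ 2⁻¹ * μ Q + μ F := by rw [h3]; exact h2
      exact (ENNReal.add_le_add_iff_left (ENNReal.mul_ne_top (by simp) hQt)).1 h5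
    calc μ Q = 2 * (2⁻¹ * μ Q) := by
          rw [← mul_assoc, ENNReal.mul_inv_cancel (by simp) (by simp), one_mul]
      _ ≤ 2 * μ F := by gcongr
  have hroot : (∫⁻ x in Q, W x ∂μ) ^ (1 / q) * (∫⁻ x in Q, σ x ∂μ) ^ θ
      ≤ C ^ (1 / q) * μ Q := by
    have h1 := ENNReal.rpow_le_rpow hAq (z := 1 / q) (by positivity)
    rw [ENNReal.mul_rpow_of_nonneg _ _ (by positivity),
      ENNReal.mul_rpow_of_nonneg _ _ (by positivity), ← ENNReal.rpow_mul, ← ENNReal.rpow_mul,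
      mul_one_div_cancel hq0.ne', ENNReal.rpow_one] at h1
    rwa [hθ, div_eq_mul_one_div (q - 1) q]
  have hcomp : (∫⁻ x in Q, σ x ∂μ) ^ θ ≤ (2 * C ^ (1 / q)) * (∫⁻ x in F, σ x ∂μ) ^ θ := by
    refine (ENNReal.mul_le_mul_iff_right hQ0 hQt).1 ?_
    calc μ Q * (∫⁻ x in Q, σ x ∂μ) ^ θ
        ≤ 2 * ((∫⁻ x in F, W x ∂μ) ^ (1 / q) * (∫⁻ x in F, σ x ∂μ) ^ θ)
            * (∫⁻ x in Q, σ x ∂μ) ^ θ := by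
          gcongr
          exact hmeas.trans (by gcongr)
      _ ≤ 2 * ((∫⁻ x in Q, W x ∂μ) ^ (1 / q) * (∫⁻ x in F, σ x ∂μ) ^ θ)
            * (∫⁻ x in Q, σ x ∂μ) ^ θ := by
          gcongr
      _ = 2 * ((∫⁻ x in Q, W x ∂μ) ^ (1 / q) * (∫⁻ x in Q, σ x ∂μ) ^ θ)
            * (∫⁻ x in F, σ x ∂μ) ^ θ := by ring
      _ ≤ 2 * (C ^ (1 / q) * μ Q) * (∫⁻ x in F, σ x ∂μ) ^ θ := by gcongr
      _ = _ := by ring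
  have hLF : ∫⁻ x in Q, σ x ∂μ ≤ L * ∫⁻ x in F, σ x ∂μ := by
    have h1 := ENNReal.rpow_le_rpow hcomp (z := 1 / θ) (by positivity)
    rw [ENNReal.mul_rpow_of_nonneg _ _ (by positivity), ← ENNReal.rpow_mul, ← ENNReal.rpow_mul,
      mul_one_div_cancel hθ0.ne', ENNReal.rpow_one, ENNReal.rpow_one] at h1
    refine h1.trans ?_
    gcongr
    exact le_add_right le_rfl
  have hsplit : ∫⁻ x in Q, σ x ∂μ = ∫⁻ x in E, σ x ∂μ + ∫⁻ x in F, σ x ∂μ := by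
    rw [← lintegral_union hFm Set.disjoint_sdiff_right, hF, Set.union_sdiff_cancel hEQ]
  have hinv : L⁻¹ * ∫⁻ x in Q, σ x ∂μ ≤ ∫⁻ x in F, σ x ∂μ := by
    calc L⁻¹ * ∫⁻ x in Q, σ x ∂μ ≤ L⁻¹ * (L * ∫⁻ x in F, σ x ∂μ) := by gcongr
      _ = _ := by rw [← mul_assoc, ENNReal.inv_mul_cancel hL0 hLt, one_mul]
  have hfin : L⁻¹ * ∫⁻ x in Q, σ x ∂μ ≠ ⊤ :=
    ENNReal.mul_ne_top (ENNReal.inv_ne_top.2 hL0) hσQ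
  refine (ENNReal.add_le_add_iff_right hfin).1 ?_
  rw [← add_mul, tsub_add_cancel_of_le (ENNReal.inv_le_one.2 hL1), one_mul]
  calc ∫⁻ x in E, σ x ∂μ + L⁻¹ * ∫⁻ x in Q, σ x ∂μ
      ≤ ∫⁻ x in E, σ x ∂μ + ∫⁻ x in F, σ x ∂μ := by gcongr
    _ = _ := hsplit.symm

/-- The label of the half-open dyadic cube of side `2⁻ᵐ` containing `x`. -/
noncomputable def dyIdx {n : ℕ} (m : ℕ) (x : Fin n → ℝ) : Fin n → ℤ := fun i => ⌊(2 : ℝ) ^ m * x i⌋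

lemma cell_dyIdx {n : ℕ} (m : ℕ) (x : Fin n → ℝ) :
    cell dyIdx m x = Set.univ.pi fun i =>
      Set.Ico ((dyIdx m x i : ℝ) / 2 ^ m) (((dyIdx m x i : ℝ) + 1) / 2 ^ m) := by
  have h2 : (0 : ℝ) < 2 ^ m := by positivity
  ext y
  simp only [cell, Set.mem_ofPred_eq, Set.mem_pi, Set.mem_univ, true_implies, Set.mem_Ico]
  rw [funext_iff]
  refine forall_congr' fun i => ?_
  rw [div_le_iff₀ h2, lt_div_iff₀ h2, mul_comm (y i)]
  conv_lhs => lhs; simp only [dyIdx]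
  exact Int.floor_eq_iff

lemma volume_cell_dyIdx {n : ℕ} (m : ℕ) (x : Fin n → ℝ) :
    volume (cell dyIdx m x) = ENNReal.ofReal ((2 ^ m)⁻¹ ^ n) := by
  rw [cell_dyIdx, Real.volume_pi_Ico]
  have : ∀ i, ((dyIdx m x i : ℝ) + 1) / 2 ^ m - (dyIdx m x i : ℝ) / 2 ^ m = (2 ^ m)⁻¹ := by
    intro i; ring
  simp only [this, Finset.prod_const, Finset.card_univ, Fintype.card_fin]
  rw [ENNReal.ofReal_pow (by positivity)]

/-- The centre of the dyadic cube of side `2⁻ᵐ` containing `x`. -/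
noncomputable def dyCenter {n : ℕ} (m : ℕ) (x : Fin n → ℝ) : Fin n → ℝ :=
  fun i => ((dyIdx m x i : ℝ) + 1 / 2) / 2 ^ m

lemma cell_subset_closedBall {n : ℕ} (m : ℕ) (x : Fin n → ℝ) :
    cell dyIdx m x ⊆ closedBall (dyCenter m x) ((2 ^ m)⁻¹ / 2) := by
  intro y hy
  rw [cell_dyIdx] at hy
  rw [mem_closedBall, dist_pi_le_iff (by positivity)]
  intro i
  obtain ⟨h1, h2⟩ := hy i (Set.mem_univ i)
  have e1 : (dyIdx m x i : ℝ) / 2 ^ m = dyCenter m x i - (2 ^ m)⁻¹ / 2 := by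
    simp only [dyCenter]; ring
  have e2 : ((dyIdx m x i : ℝ) + 1) / 2 ^ m = dyCenter m x i + (2 ^ m)⁻¹ / 2 := by
    simp only [dyCenter]; ring
  rw [Real.dist_eq, abs_le]
  constructor <;> linarith

lemma volume_closedBall_dyCenter {n : ℕ} (m : ℕ) (x : Fin n → ℝ) :
    volume (closedBall (dyCenter m x) ((2 ^ m)⁻¹ / 2)) = volume (cell dyIdx m x) := by
  rw [volume_cell_dyIdx, Real.volume_pi_closedBall _ (by positivity), Fintype.card_fin]
  congr 2
  ring

lemma isNestedPartition_dyIdx (n : ℕ) :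
    IsNestedPartition (dyIdx : ℕ → (Fin n → ℝ) → (Fin n → ℤ)) where
  meas m x := by
    rw [cell_dyIdx]
    exact MeasurableSet.univ_pi fun i => measurableSet_Ico
  nest m x y hxy := by
    funext i
    have key : ∀ z : Fin n → ℝ, dyIdx m z i = dyIdx (m + 1) z i / 2 := by
      intro z
      have h := Int.floor_div_natCast ((2 : ℝ) ^ (m + 1) * z i) 2
      simp only [dyIdx]
      rw [show (2 : ℤ) = ((2 : ℕ) : ℤ) by norm_num, ← h]
      congr 1
      push_cast
      ring
    rw [key x, key y, hxy]

/-- The self-improvement property of a Muckenhoupt pair on `ℝⁿ` with the sup norm, whose closed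
balls are the axis-parallel cubes. -/
theorem higher_integrability_cubes {n : ℕ} (W σ : (Fin n → ℝ) → ℝ≥0∞)
    (hW : Measurable W) (hσ : Measurable σ) {q : ℝ} (hq : 1 < q) {C : ℝ≥0∞} (hC : C ≠ ⊤)
    (hWσ : ∀ᵐ x, 1 ≤ W x * σ x ^ (q - 1))
    (hfin : ∀ c r, 0 < r → ∫⁻ x in closedBall c r, σ x ≠ ⊤)
    (hAq : ∀ c r, 0 < r → (∫⁻ x in closedBall c r, W x) *
      (∫⁻ x in closedBall c r, σ x) ^ (q - 1) ≤ C * volume (closedBall c r) ^ q) :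
    ∃ η : ℝ, 0 < η ∧ ∀ K : Set (Fin n → ℝ), Bornology.IsBounded K →
      ∫⁻ x in K, σ x ^ (1 + η) < ⊤ := by
  obtain ⟨β, hβ, hratio⟩ := exists_mass_ratio volume W σ hW hσ hq hC hWσ
  have hP := isNestedPartition_dyIdx n
  have hr : ∀ m : ℕ, (0 : ℝ) < (2 ^ m)⁻¹ / 2 := fun m => by positivity
  have hμ0 : ∀ m (x : Fin n → ℝ), volume (cell dyIdx m x) ≠ 0 := by
    intro m x
    rw [volume_cell_dyIdx, ne_eq, ENNReal.ofReal_eq_zero, not_le]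
    positivity
  have hμt : ∀ m (x : Fin n → ℝ), volume (cell dyIdx m x) ≠ ⊤ := by
    intro m x
    rw [volume_cell_dyIdx]
    exact ENNReal.ofReal_ne_top
  have hσcell : ∀ m (x : Fin n → ℝ), ∫⁻ y in cell dyIdx m x, σ y ≠ ⊤ := fun m x =>
    ne_top_of_le_ne_top (hfin _ _ (hr m)) (lintegral_mono_set (cell_subset_closedBall m x))
  obtain ⟨η, hη, hInt⟩ := higher_integrability hP volume σ hσ (2 ^ n) β
    (one_le_pow₀ (by norm_num)) (ENNReal.pow_ne_top (by simp)) hβ hμ0 hμt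
    (by
      intro m x
      rw [volume_cell_dyIdx, volume_cell_dyIdx, ← ENNReal.ofReal_ofNat 2,
        ← ENNReal.ofReal_pow (by positivity), ← ENNReal.ofReal_mul (by positivity), ← mul_pow]
      refine le_of_eq ?_
      congr 2
      rw [pow_succ]
      field_simp)
    (by
      intro x
      rw [withDensity_apply _ (hP.meas 0 x)]
      exact hσcell 0 x)
    (by
      intro m x E hE hEQ hEh
      rw [withDensity_apply _ hE, withDensity_apply _ (hP.meas m x)]
      refine hratio _ (hP.meas m x) (hμ0 m x) (hμt m x) (hσcell m x) ?_ E hE hEQ hEh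
      rw [← volume_closedBall_dyCenter]
      refine le_trans ?_ (hAq (dyCenter m x) _ (hr m))
      have hq1 : 0 ≤ q - 1 := by linarith
      gcongr
      · exact cell_subset_closedBall m x
      · exact cell_subset_closedBall m x)
    (by
      intro x₀
      set f : (Fin n → ℝ) → ℝ≥0∞ := (cell dyIdx 0 x₀).indicator σ with hf
      have hfint : ∫⁻ y, f y ≠ ⊤ := by
        rw [hf, lintegral_indicator (hP.meas 0 x₀)]
        exact hσcell 0 x₀
      have hae := (IsUnifLocDoublingMeasure.vitaliFamily
        (volume : Measure (Fin n → ℝ)) 1).ae_tendsto_lintegral_div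
        (hσ.indicator (hP.meas 0 x₀)).aemeasurable hfint
      filter_upwards [hae] with x hx hxD L hL
      have hδ : Filter.Tendsto (fun m : ℕ => ((2 : ℝ) ^ m)⁻¹ / 2) Filter.atTop
          (nhdsWithin 0 (Set.Ioi 0)) := by
        rw [tendsto_nhdsWithin_iff]
        refine ⟨?_, Filter.Eventually.of_forall fun m => hr m⟩
        have h1 : Filter.Tendsto (fun m : ℕ => ((1 / 2 : ℝ)) ^ m / 2) Filter.atTop
            (nhds (0 / 2)) :=
          (_root_.tendsto_pow_atTop_nhds_zero_of_lt_one (by norm_num) (by norm_num)).div_const 2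
        simpa using h1
      have ht := hx.comp (IsUnifLocDoublingMeasure.tendsto_closedBall_filterAt volume
        (K := 1) (x := x) (fun m => dyCenter m x) (fun m : ℕ => ((2 : ℝ) ^ m)⁻¹ / 2) hδ
        (Filter.Eventually.of_forall fun m => by
          rw [one_mul]
          exact cell_subset_closedBall m x rfl))
      have hfx : f x = σ x := Set.indicator_of_mem hxD _
      change Filter.Tendsto _ _ (nhds (f x)) at ht
      rw [hfx] at ht
      refine le_of_tendsto' ht fun m => ?_
      -- The closed cube and the half-open one differ by a null set.
      have hcube : (cell dyIdx m x : Set (Fin n → ℝ)) =ᵐ[volume]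
          closedBall (dyCenter m x) ((2 ^ m)⁻¹ / 2) := by
        refine ae_eq_of_subset_of_measure_ge (cell_subset_closedBall m x)
          (volume_closedBall_dyCenter m x).le (hP.meas m x).nullMeasurableSet ?_
        rw [volume_closedBall_dyCenter]
        exact hμt m x
      simp only [Function.comp_apply]
      rw [← setLIntegral_congr hcube, volume_closedBall_dyCenter]
      refine ENNReal.div_le_of_le_mul ?_
      refine le_trans ?_ (hL m)
      rw [withDensity_apply _ (hP.meas m x)]
      exact lintegral_mono fun y => Set.indicator_le_self _ _ y)
  refine ⟨η, hη, fun K hK => ?_⟩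
  obtain ⟨r, hr⟩ := hK.subset_closedBall 0
  -- A bounded set meets only finitely many unit cubes.
  set S : Set (Fin n → ℤ) := dyIdx 0 '' K with hS
  have hSfin : S.Finite := by
    refine (Set.finite_Icc (fun _ => ⌊-r⌋ : Fin n → ℤ) (fun _ => ⌊r⌋)).subset ?_
    rintro _ ⟨x, hx, rfl⟩
    have hx' := hr hx
    have hb : ∀ i, |x i| ≤ r := fun i => by
      have h1 : ‖x i‖ ≤ ‖x‖ := norm_le_pi_norm x i
      have h2 : ‖x‖ ≤ r := by simpa using hx'
      exact h1.trans h2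
    refine ⟨fun i => ?_, fun i => ?_⟩
    · simp only [dyIdx, pow_zero, one_mul]
      exact Int.floor_le_floor (abs_le.1 (hb i)).1
    · simp only [dyIdx, pow_zero, one_mul]
      exact Int.floor_le_floor (abs_le.1 (hb i)).2
  have hKsub : K ⊆ ⋃ s ∈ S, {y | dyIdx 0 y = s} := by
    intro x hx
    exact Set.mem_biUnion (Set.mem_image_of_mem _ hx) rfl
  refine (lintegral_mono_set hKsub).trans_lt ?_
  have := hSfin.to_subtype
  have := Fintype.ofFinite S
  rw [Set.biUnion_eq_iUnion]
  refine (lintegral_iUnion_le _ _).trans_lt ?_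
  rw [tsum_fintype]
  refine ENNReal.sum_lt_top.2 ?_
  rintro ⟨_, x, -, rfl⟩ -
  exact hInt x

/-! ### Dual weights in Euclidean space -/

lemma toLp_preimage_axisCube {n : ℕ} (c : EuclideanSpace ℝ (Fin n)) {r : ℝ} (hr : 0 ≤ r) :
    (WithLp.toLp 2 : (Fin n → ℝ) → EuclideanSpace ℝ (Fin n)) ⁻¹' axisCube c r
      = closedBall (WithLp.ofLp c) r := by
  ext y
  rw [mem_closedBall, dist_pi_le_iff hr]
  simp [axisCube, Real.dist_eq]

lemma measurableEmbedding_toLp (n : ℕ) :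
    MeasurableEmbedding (WithLp.toLp 2 : (Fin n → ℝ) → EuclideanSpace ℝ (Fin n)) :=
  (MeasurableEquiv.toLp 2 (Fin n → ℝ)).measurableEmbedding

lemma lintegral_axisCube {n : ℕ} (c : EuclideanSpace ℝ (Fin n)) {r : ℝ} (hr : 0 ≤ r)
    (f : EuclideanSpace ℝ (Fin n) → ℝ≥0∞) :
    ∫⁻ x in axisCube c r, f x = ∫⁻ y in closedBall (WithLp.ofLp c) r, f (WithLp.toLp 2 y) := by
  rw [← toLp_preimage_axisCube c hr]
  exact ((PiLp.volume_preserving_toLp (Fin n)).setLIntegral_comp_preimage_emb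
    (measurableEmbedding_toLp n) f _).symm

lemma volume_axisCube {n : ℕ} (c : EuclideanSpace ℝ (Fin n)) {r : ℝ} (hr : 0 ≤ r) :
    volume (axisCube c r) = volume (closedBall (WithLp.ofLp c) r) := by
  simpa using lintegral_axisCube c hr (fun _ => 1)

lemma volume_axisCube_ne_zero {n : ℕ} (c : EuclideanSpace ℝ (Fin n)) {r : ℝ} (hr : 0 < r) :
    volume (axisCube c r) ≠ 0 := by
  rw [volume_axisCube c hr.le]
  exact (measure_closedBall_pos volume _ hr).ne'

lemma volume_axisCube_ne_top {n : ℕ} (c : EuclideanSpace ℝ (Fin n)) {r : ℝ} (hr : 0 < r) :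
    volume (axisCube c r) ≠ ⊤ := by
  rw [volume_axisCube c hr.le]
  exact measure_closedBall_lt_top.ne

/-- The dual weight of a Muckenhoupt weight is integrable on cubes: the weight itself has positive
mass on each cube, so the `A_q` bound excludes an infinite dual mass. -/
lemma MemAq.dual_ne_top {n : ℕ} {q : ℝ} (hq : 1 < q) {v : EuclideanSpace ℝ (Fin n) → ℝ}
    (hvm : Measurable v) (hv0 : ∀ᵐ x, 0 < v x) (hv : MemAq q v)
    (c : EuclideanSpace ℝ (Fin n)) {r : ℝ} (hr : 0 < r) :
    ∫⁻ x in axisCube c r, ENNReal.ofReal (v x ^ (-(1 / (q - 1)))) ≠ ⊤ := by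
  obtain ⟨C, hC, h⟩ := hv
  intro htop
  have h1 := h c r hr
  have hV0 := volume_axisCube_ne_zero c hr
  have hVt := volume_axisCube_ne_top c hr
  have hpos : ∫⁻ x in axisCube c r, ENNReal.ofReal (v x) ≠ 0 := by
    intro h0
    rw [lintegral_eq_zero_iff hvm.ennreal_ofReal] at h0
    have h2 : ∀ᵐ x ∂(volume.restrict (axisCube c r)), False := by
      filter_upwards [h0, ae_restrict_of_ae hv0] with x hx hx'
      simp only [Pi.zero_apply, ENNReal.ofReal_eq_zero] at hx
      linarith
    simp only [Filter.eventually_false_iff_eq_bot, ae_eq_bot, Measure.restrict_eq_zero] at h2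
    exact hV0 h2
  rw [htop, ENNReal.mul_top (ENNReal.inv_ne_zero.2 hVt), ENNReal.top_rpow_of_pos (by linarith),
    ENNReal.mul_top (mul_ne_zero (ENNReal.inv_ne_zero.2 hVt) hpos)] at h1
  exact hC (top_le_iff.1 h1)

lemma lintegral_bounded_lt_top {n : ℕ} {f : EuclideanSpace ℝ (Fin n) → ℝ≥0∞}
    (hf : ∀ c r, 0 < r → ∫⁻ x in axisCube c r, f x ≠ ⊤)
    {K : Set (EuclideanSpace ℝ (Fin n))} (hK : Bornology.IsBounded K) :
    ∫⁻ x in K, f x < ⊤ := by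
  obtain ⟨r, hr⟩ := hK.subset_closedBall 0
  refine lt_of_le_of_lt (lintegral_mono_set ?_) (hf 0 (max r 1) (by positivity)).lt_top
  intro x hx i
  have h1 : ‖x i‖ ≤ ‖x‖ := PiLp.norm_apply_le x i
  have h2 : ‖x‖ ≤ r := by simpa using hr hx
  simpa using Or.inl (h1.trans h2)

/-- Self-improvement of the dual weight of an `A_q` weight. -/
lemma MemAq.exists_dual_higher {n : ℕ} {q : ℝ} (hq : 1 < q) {w : EuclideanSpace ℝ (Fin n) → ℝ}
    (hwm : Measurable w) (hw0 : ∀ᵐ x, 0 < w x) (hw : MemAq q w) :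
    ∃ η : ℝ, 0 < η ∧ ∀ K : Set (EuclideanSpace ℝ (Fin n)), Bornology.IsBounded K →
      ∫⁻ x in K, ENNReal.ofReal (w x ^ (-(1 / (q - 1)))) ^ (1 + η) < ⊤ := by
  have hdual := fun c r (hr : 0 < r) => hw.dual_ne_top hq hwm hw0 c hr
  have hq1 : 0 < q - 1 := by linarith
  obtain ⟨C, hC, h⟩ := hw
  have htoLp : Measurable (WithLp.toLp 2 : (Fin n → ℝ) → EuclideanSpace ℝ (Fin n)) :=
    (measurableEmbedding_toLp n).measurable
  obtain ⟨η, hη, hInt⟩ := higher_integrability_cubes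
    (fun y : Fin n → ℝ => ENNReal.ofReal (w (WithLp.toLp 2 y)))
    (fun y : Fin n → ℝ => ENNReal.ofReal (w (WithLp.toLp 2 y) ^ (-(1 / (q - 1)))))
    (hwm.comp htoLp).ennreal_ofReal ((hwm.comp htoLp).pow_const _).ennreal_ofReal hq hC
    (by
      have h0 := (PiLp.volume_preserving_toLp (Fin n)).quasiMeasurePreserving.ae hw0
      filter_upwards [h0] with y hy
      rw [ENNReal.ofReal_rpow_of_pos (Real.rpow_pos_of_pos hy _), ← Real.rpow_mul hy.le,
        ← ENNReal.ofReal_mul hy.le]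
      have : -(1 / (q - 1)) * (q - 1) = -1 := by field_simp
      rw [this, Real.rpow_neg_one, mul_inv_cancel₀ hy.ne']
      simp)
    (fun c r hr => by
      have := hdual (WithLp.toLp 2 c) r hr
      rwa [lintegral_axisCube _ hr.le] at this)
    (fun c r hr => by
      have h1 := h (WithLp.toLp 2 c) r hr
      have hV0 := volume_axisCube_ne_zero (WithLp.toLp 2 c) hr
      have hVt := volume_axisCube_ne_top (WithLp.toLp 2 c) hr
      rw [lintegral_axisCube _ hr.le, lintegral_axisCube _ hr.le] at h1
      rw [volume_axisCube _ hr.le] at h1 hV0 hVt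
      simp only at h1 hV0 hVt
      set V := volume (closedBall c r)
      set I := ∫⁻ y in closedBall c r, ENNReal.ofReal (w (WithLp.toLp 2 y))
      set J := ∫⁻ y in closedBall c r,
        ENNReal.ofReal (w (WithLp.toLp 2 y) ^ (-(1 / (q - 1))))
      have hVq : V ^ q = V * V ^ (q - 1) := by
        conv_rhs => rw [← ENNReal.rpow_one V, ← ENNReal.rpow_mul, one_mul]
        rw [← ENNReal.rpow_add _ _ hV0 hVt]
        congr 1; ring
      have hcancel : V ^ (q - 1) * (V⁻¹) ^ (q - 1) = 1 := by
        rw [← ENNReal.mul_rpow_of_nonneg _ _ hq1.le, ENNReal.mul_inv_cancel hV0 hVt,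
          ENNReal.one_rpow]
      calc I * J ^ (q - 1)
          = (V * V⁻¹) * (V ^ (q - 1) * (V⁻¹) ^ (q - 1)) * (I * J ^ (q - 1)) := by
            rw [hcancel, ENNReal.mul_inv_cancel hV0 hVt, one_mul, one_mul]
        _ = V ^ q * ((V⁻¹ * I) * (V⁻¹ * J) ^ (q - 1)) := by
            rw [ENNReal.mul_rpow_of_nonneg _ _ hq1.le, hVq]; ring
        _ ≤ V ^ q * C := by gcongr
        _ = C * V ^ q := mul_comm _ _)
  refine ⟨η, hη, fun K hK => lintegral_bounded_lt_top (fun c r hr => ?_) hK⟩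
  rw [lintegral_axisCube _ hr.le]
  exact (hInt _ isBounded_closedBall).ne

lemma rpow_mul_rpow_le_add {x y s t : ℝ} (hx : 0 ≤ x) (hy : 0 ≤ y) (hs : 0 ≤ s) (ht : 0 ≤ t)
    (hst : s + t ≤ 1) : x ^ s * y ^ t ≤ x + y + 1 := by
  have hM : 1 ≤ x + y + 1 := by linarith
  calc x ^ s * y ^ t ≤ (x + y + 1) ^ s * (x + y + 1) ^ t := by
        gcongr <;> linarith
    _ = (x + y + 1) ^ (s + t) := (Real.rpow_add (by linarith) _ _).symm
    _ ≤ (x + y + 1) ^ (1 : ℝ) := Real.rpow_le_rpow_of_exponent_le hM hst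
    _ = _ := Real.rpow_one _

/-- For small `ε` the weight `w a^ε` has a locally integrable dual weight of exponent `q - ε`:
the small power of `a⁻¹` is absorbed by the dual weight of `a^δ`, the remaining power of `w⁻¹` by
the higher integrability of the dual weight of `w`. -/
lemma exists_dual_integrable {n : ℕ} {q : ℝ} (hq : 1 < q)
    {w a : EuclideanSpace ℝ (Fin n) → ℝ}
    (hwm : Measurable w) (hw0 : ∀ᵐ x, 0 < w x) (ham : Measurable a) (ha0 : ∀ᵐ x, 0 < a x)
    {δ : ℝ} (hδ : 0 < δ) (hw : MemAq q w) (haδ : MemAq q (fun x => a x ^ δ)) :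
    ∃ ε ∈ Set.Ioo (0 : ℝ) (q - 1), ∀ K : Set (EuclideanSpace ℝ (Fin n)), Bornology.IsBounded K →
      ∫⁻ x in K, ENNReal.ofReal (w x * a x ^ ε) ^ (-(1 / (q - ε - 1))) < ⊤ := by
  obtain ⟨η, hη, hInt⟩ := hw.exists_dual_higher hq hwm hw0
  have hq1 : 0 < q - 1 := by linarith
  have haint : ∀ K : Set (EuclideanSpace ℝ (Fin n)), Bornology.IsBounded K →
      ∫⁻ x in K, ENNReal.ofReal ((a x ^ δ) ^ (-(1 / (q - 1)))) < ⊤ := fun K hK =>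
    lintegral_bounded_lt_top (fun c r hr => haδ.dual_ne_top hq (ham.pow_const δ)
      (ha0.mono fun x hx => Real.rpow_pos_of_pos hx δ) c hr) hK
  -- The largest `ε` for which the exponents in the pointwise bound below add up to at most `1`.
  set ε : ℝ := (q - 1) * (η / (1 + η)) / (1 + (q - 1) / δ) with hε
  have hden : 1 < 1 + (q - 1) / δ := by
    have : 0 < (q - 1) / δ := by positivity
    linarith
  have hε0 : 0 < ε := by positivity
  have hεq : ε < q - 1 := by
    have h1 : η / (1 + η) < 1 := by rw [div_lt_one (by linarith)]; linarith
    rw [hε, div_lt_iff₀ (by linarith)]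
    nlinarith
  have hεeq : ε * (1 + (q - 1) / δ) = (q - 1) * (η / (1 + η)) := by
    rw [hε]; field_simp
  have hp : 0 < q - ε - 1 := by linarith
  refine ⟨ε, ⟨hε0, hεq⟩, fun K hK => ?_⟩
  set s : ℝ := (q - 1) / (q - ε - 1) / (1 + η) with hs
  set t : ℝ := ε * (q - 1) / (δ * (q - ε - 1)) with ht
  have hst : s + t ≤ 1 := by
    have e1 : s + t = ((q - 1) / (1 + η) + ε * ((q - 1) / δ)) / (q - ε - 1) := by
      rw [hs, ht]; field_simp
    have e2 : (q - 1) / (1 + η) = (q - 1) - (q - 1) * (η / (1 + η)) := by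
      field_simp; ring
    rw [e1, div_le_one hp, e2, ← hεeq]
    linarith
  have hbound : ∀ᵐ x ∂(volume.restrict K),
      ENNReal.ofReal (w x * a x ^ ε) ^ (-(1 / (q - ε - 1))) ≤
        ENNReal.ofReal (w x ^ (-(1 / (q - 1)))) ^ (1 + η)
          + ENNReal.ofReal ((a x ^ δ) ^ (-(1 / (q - 1)))) + 1 := by
    filter_upwards [ae_restrict_of_ae hw0, ae_restrict_of_ae ha0] with x hwx hax
    have hX : 0 < w x ^ (-(1 / (q - 1))) := Real.rpow_pos_of_pos hwx _
    have hY : 0 < (a x ^ δ) ^ (-(1 / (q - 1))) :=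
      Real.rpow_pos_of_pos (Real.rpow_pos_of_pos hax _) _
    have haε : 0 < a x ^ ε := Real.rpow_pos_of_pos hax _
    rw [ENNReal.ofReal_rpow_of_pos (mul_pos hwx haε), ENNReal.ofReal_rpow_of_pos hX,
      ← ENNReal.ofReal_add (by positivity) hY.le, ← ENNReal.ofReal_one,
      ← ENNReal.ofReal_add (by positivity) zero_le_one]
    refine ENNReal.ofReal_le_ofReal ?_
    have key := rpow_mul_rpow_le_add (x := (w x ^ (-(1 / (q - 1)))) ^ (1 + η))
      (y := (a x ^ δ) ^ (-(1 / (q - 1)))) (s := s) (t := t) (by positivity) hY.le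
      (by positivity) (by positivity) hst
    refine le_trans (le_of_eq ?_) key
    rw [Real.mul_rpow hwx.le haε.le, ← Real.rpow_mul hax.le, ← Real.rpow_mul hwx.le,
      ← Real.rpow_mul hwx.le, ← Real.rpow_mul hax.le, ← Real.rpow_mul hax.le]
    congr 2
    · rw [hs]; field_simp
    · rw [ht]; field_simp
  refine (lintegral_mono_ae hbound).trans_lt ?_
  rw [lintegral_add_right _ measurable_const, lintegral_add_right _
    ((ham.pow_const δ).pow_const _).ennreal_ofReal]
  refine ENNReal.add_lt_top.2 ⟨ENNReal.add_lt_top.2 ⟨hInt K hK, haint K hK⟩, ?_⟩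
  simpa using hK.measure_lt_top

/-- Weighted Hölder inequality: `L^p(V)` embeds in `L¹` when the dual weight is integrable. -/
lemma lintegral_le_weighted {X : Type*} [MeasurableSpace X] (μ : Measure X) {f V : X → ℝ≥0∞}
    (hf : AEMeasurable f μ) (hV : Measurable V) (hV0 : ∀ᵐ x ∂μ, V x ≠ 0)
    (hVt : ∀ᵐ x ∂μ, V x ≠ ⊤) {p : ℝ} (hp : 1 < p) :
    ∫⁻ x, f x ∂μ ≤ (∫⁻ x, f x ^ p * V x ∂μ) ^ (1 / p)
      * (∫⁻ x, V x ^ (-(1 / (p - 1))) ∂μ) ^ ((p - 1) / p) := by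
  have hp0 : 0 < p := by linarith
  have hp1 : 0 < p - 1 := by linarith
  calc ∫⁻ x, f x ∂μ = ∫⁻ x, (f x ^ p * V x) ^ (1 / p)
        * (V x ^ (-(1 / (p - 1)))) ^ ((p - 1) / p) ∂μ := by
        refine lintegral_congr_ae ?_
        filter_upwards [hV0, hVt] with x h0 ht
        rw [ENNReal.mul_rpow_of_nonneg _ _ (by positivity), ← ENNReal.rpow_mul,
          ← ENNReal.rpow_mul, mul_one_div_cancel hp0.ne', ENNReal.rpow_one, mul_assoc,
          ← ENNReal.rpow_add _ _ h0 ht]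
        have : 1 / p + -(1 / (p - 1)) * ((p - 1) / p) = 0 := by field_simp; ring
        rw [this, ENNReal.rpow_zero, mul_one]
    _ ≤ _ := by
        refine ENNReal.lintegral_mul_norm_pow_le ((hf.pow_const p).mul hV.aemeasurable)
          (hV.pow_const _).aemeasurable (by positivity) (by positivity) ?_
        field_simp
        ring

/-! ### Completeness -/

/-- The measure `w a^ε dx` on `Ω`. -/
noncomputable def wMeas {n : ℕ} (w a : EuclideanSpace ℝ (Fin n) → ℝ)
    (Ω : Set (EuclideanSpace ℝ (Fin n))) (ε : ℝ) : Measure (EuclideanSpace ℝ (Fin n)) :=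
  (volume.restrict Ω).withDensity fun x => ENNReal.ofReal (w x * a x ^ ε)

lemma eLpNorm_wMeas {n : ℕ} {w a : EuclideanSpace ℝ (Fin n) → ℝ}
    (hwm : Measurable w) (ham : Measurable a) (Ω : Set (EuclideanSpace ℝ (Fin n))) (ε : ℝ)
    {p : ℝ} (hp : 0 < p) {E : Type*} [NormedAddCommGroup E] (g : EuclideanSpace ℝ (Fin n) → E) :
    eLpNorm g (ENNReal.ofReal p) (wMeas w a Ω ε) =
      (∫⁻ x in Ω, ‖g x‖ₑ ^ p * ENNReal.ofReal (w x * a x ^ ε)) ^ (1 / p) := by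
  have hV : Measurable fun x => ENNReal.ofReal (w x * a x ^ ε) :=
    (hwm.mul (ham.pow_const ε)).ennreal_ofReal
  rw [eLpNorm_eq_lintegral_rpow_enorm_toReal (by simpa using hp) ENNReal.ofReal_ne_top,
    ENNReal.toReal_ofReal hp.le, wMeas,
    lintegral_withDensity_eq_lintegral_mul_non_measurable _ hV (by simp)]
  congr 1
  exact lintegral_congr fun x => mul_comm _ _

/-- The grand Sobolev norm in terms of the norms `eLpNorm` for the measures `w a^ε dx`. -/
lemma grandSobNormW_eq {n : ℕ} {q : ℝ} {w a : EuclideanSpace ℝ (Fin n) → ℝ}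
    (hwm : Measurable w) (ham : Measurable a) (Ω : Set (EuclideanSpace ℝ (Fin n)))
    (f : EuclideanSpace ℝ (Fin n) → ℝ) (g : EuclideanSpace ℝ (Fin n) → EuclideanSpace ℝ (Fin n)) :
    grandSobNormW q w a Ω f g = ⨆ (ε : ℝ) (_ : ε ∈ Set.Ioo (0 : ℝ) (q - 1)),
      ENNReal.ofReal (ε ^ (1 / (q - ε))) *
        (eLpNorm f (ENNReal.ofReal (q - ε)) (wMeas w a Ω ε)
          + eLpNorm g (ENNReal.ofReal (q - ε)) (wMeas w a Ω ε)) := by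
  unfold grandSobNormW
  refine iSup_congr fun ε => iSup_congr fun hε => ?_
  have hp : 0 < q - ε := by linarith [hε.2]
  rw [eLpNorm_wMeas hwm ham Ω ε hp, eLpNorm_wMeas hwm ham Ω ε hp]
  simp only [wLqNorm, ← Real.enorm_eq_ofReal_abs, enorm_norm]

/-- The Fatou lemma as a closedness statement for balls of `L^p` under a.e. convergence. -/
lemma eLpNorm_le_of_tendsto {X E : Type*} [MeasurableSpace X] [NormedAddCommGroup E]
    {μ : Measure X} {p : ℝ≥0∞} {h : ℕ → X → E} {h' : X → E} {b : ℝ≥0∞}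
    (hm : ∀ j, AEStronglyMeasurable (h j) μ)
    (hlim : ∀ᵐ x ∂μ, Filter.Tendsto (fun j => h j x) Filter.atTop (nhds (h' x)))
    (hb : ∀ᶠ j in Filter.atTop, eLpNorm (h j) p μ ≤ b) : eLpNorm h' p μ ≤ b :=
  (Lp.eLpNorm_lim_le_liminf_eLpNorm hm h' hlim).trans
    ((Filter.liminf_le_liminf hb).trans (Filter.liminf_const b).le)

/-- A rapidly Cauchy sequence in `L^p(ν)` converges almost everywhere; measurability is tracked for
a measure `μ` with the same null sets. -/
lemma exists_ae_limit {X E : Type*} [MeasurableSpace X] [NormedAddCommGroup E] [CompleteSpace E]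
    {μ ν : Measure X} (hμν : μ ≪ ν) (hνμ : ν ≪ μ) {p : ℝ≥0∞} (hp : 1 ≤ p) {h : ℕ → X → E}
    (hm : ∀ j, AEStronglyMeasurable (h j) μ) {B : ℕ → ℝ≥0∞} (hB : ∑' i, B i ≠ ⊤)
    (hc : ∀ N n m, N ≤ n → N ≤ m → eLpNorm (h n - h m) p ν < B N) :
    ∃ h' : X → E, AEStronglyMeasurable h' μ ∧
      ∀ᵐ x ∂μ, Filter.Tendsto (fun j => h j x) Filter.atTop (nhds (h' x)) := by
  classical
  have h1 := hμν.ae_le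
    (Lp.ae_tendsto_of_cauchy_eLpNorm (fun j => (hm j).mono_ac hνμ) hp hB hc)
  have h2 : ∀ᵐ x ∂μ, Filter.Tendsto (fun j => h j x) Filter.atTop
      (nhds (if hx : ∃ l, Filter.Tendsto (fun j => h j x) Filter.atTop (nhds l)
        then hx.choose else 0)) := by
    filter_upwards [h1] with x hx
    rw [dif_pos hx]
    exact hx.choose_spec
  exact ⟨_, aestronglyMeasurable_of_tendsto_ae _ hm h2, h2⟩

/-- Convergence in `L¹` on a compact set passes to the limit in integrals against continuous
functions supported in that set. -/
lemma tendsto_integral_mul_test {n : ℕ} {Ω K : Set (EuclideanSpace ℝ (Fin n))}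
    (hΩ : MeasurableSet Ω) (hK : IsCompact K) (hKΩ : K ⊆ Ω) {ψ : EuclideanSpace ℝ (Fin n) → ℝ}
    (hψ : Continuous ψ) (hψK : ∀ x, x ∉ K → ψ x = 0)
    {u : ℕ → EuclideanSpace ℝ (Fin n) → ℝ} {v : EuclideanSpace ℝ (Fin n) → ℝ}
    (hu : ∀ j, IntegrableOn (u j) K) (hv : IntegrableOn v K)
    (hlim : Filter.Tendsto (fun j => ∫⁻ x in K, ‖u j x - v x‖ₑ) Filter.atTop (nhds 0)) :
    Filter.Tendsto (fun j => ∫ x in Ω, u j x * ψ x) Filter.atTop (nhds (∫ x in Ω, v x * ψ x)) := by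
  have hred : ∀ z : EuclideanSpace ℝ (Fin n) → ℝ,
      ∫ x in Ω, z x * ψ x = ∫ x in K, z x * ψ x := fun z =>
    setIntegral_eq_of_subset_of_forall_sdiff_eq_zero hΩ hKΩ
      (fun x hx => by rw [hψK x hx.2, mul_zero])
  simp only [hred]
  obtain ⟨C, hC⟩ := hK.exists_bound_of_continuousOn hψ.continuousOn
  have hmul : ∀ z : EuclideanSpace ℝ (Fin n) → ℝ, IntegrableOn z K →
      IntegrableOn (fun x => z x * ψ x) K := fun z hz =>
    hz.mul_continuousOn hψ.continuousOn hK
  refine tendsto_integral_of_L1 _ (hmul v hv).aestronglyMeasurable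
    (Filter.Eventually.of_forall fun j => hmul _ (hu j)) ?_
  have hb : Filter.Tendsto (fun j => (∫⁻ x in K, ‖u j x - v x‖ₑ) * ENNReal.ofReal C) Filter.atTop
      (nhds (0 * ENNReal.ofReal C)) :=
    ENNReal.Tendsto.mul_const hlim (Or.inr ENNReal.ofReal_ne_top)
  rw [zero_mul] at hb
  refine tendsto_of_tendsto_of_tendsto_of_le_of_le tendsto_const_nhds hb
    (fun j => bot_le) (fun j => ?_)
  simp only
  rw [← lintegral_mul_const' _ _ ENNReal.ofReal_ne_top]
  refine lintegral_mono_ae ?_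
  filter_upwards [ae_restrict_mem hK.measurableSet] with x hx
  rw [← sub_mul, enorm_mul]
  gcongr
  rw [← ofReal_norm]
  exact ENNReal.ofReal_le_ofReal (hC x hx)

/-- under the stated hypotheses on the weights `w` and `a`, the
generalized grand Sobolev space `W^{1,q)}_a(Ω,w)` is a Banach space; in
particular it is complete: every Cauchy sequence (w.r.t. its norm) of functions
with finite norm converges in the norm to a member of the space. -/
theorem grand_sobolev_complete {n : ℕ} (q : ℝ) (hq : 1 < q)
    (Ω : Set (EuclideanSpace ℝ (Fin n))) (hΩ : IsOpen Ω)
    (w a : EuclideanSpace ℝ (Fin n) → ℝ)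
    (hw_meas : Measurable w) (hw_pos : ∀ᵐ x ∂volume, 0 < w x)
    (ha_meas : Measurable a) (ha_pos : ∀ᵐ x ∂volume, 0 < a x)
    (hloc : ∀ ε ∈ Set.Ioo (0 : ℝ) (q - 1),
      LocallyIntegrableOn (fun x => w x * a x ^ ε) Ω volume)
    (ha_mem : wLqNorm q w Ω a ≠ ⊤)
    (δ : ℝ) (hδ : 0 < δ)
    (hw : MemAq q w) (haδ : MemAq q (fun x => a x ^ δ))
    (F : ℕ → EuclideanSpace ℝ (Fin n) → ℝ)
    (G : ℕ → EuclideanSpace ℝ (Fin n) → EuclideanSpace ℝ (Fin n))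
    (hFG : ∀ k, IsWeakGradOn (F k) (G k) Ω)
    (hF_mem : ∀ k, grandSobNormW q w a Ω (F k) (G k) ≠ ⊤)
    (hF_cauchy : ∀ δ' : ℝ, 0 < δ' → ∃ N : ℕ, ∀ m ≥ N, ∀ k ≥ N,
      grandSobNormW q w a Ω (fun x => F m x - F k x) (fun x => G m x - G k x)
        < ENNReal.ofReal δ') :
    ∃ (f : EuclideanSpace ℝ (Fin n) → ℝ)
      (gf : EuclideanSpace ℝ (Fin n) → EuclideanSpace ℝ (Fin n)),
      IsWeakGradOn f gf Ω ∧ grandSobNormW q w a Ω f gf ≠ ⊤ ∧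
        ∀ δ' : ℝ, 0 < δ' → ∃ N : ℕ, ∀ k ≥ N,
          grandSobNormW q w a Ω (fun x => F k x - f x) (fun x => G k x - gf x)
            < ENNReal.ofReal δ' := by
  have hc0 : ∀ ε ∈ Set.Ioo (0 : ℝ) (q - 1), ENNReal.ofReal (ε ^ (1 / (q - ε))) ≠ 0 := by
    intro ε hε
    rw [ne_eq, ENNReal.ofReal_eq_zero, not_le]
    exact Real.rpow_pos_of_pos hε.1 _
  have hp1 : ∀ ε ∈ Set.Ioo (0 : ℝ) (q - 1), 1 ≤ ENNReal.ofReal (q - ε) := by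
    intro ε hε
    rw [ENNReal.one_le_ofReal]
    linarith [hε.2]
  have hac : ∀ ε, wMeas w a Ω ε ≪ volume.restrict Ω := fun ε =>
    withDensity_absolutelyContinuous _ _
  have hVpos : ∀ ε : ℝ, ∀ᵐ x ∂(volume : Measure (EuclideanSpace ℝ (Fin n))),
      ENNReal.ofReal (w x * a x ^ ε) ≠ 0 := by
    intro ε
    filter_upwards [hw_pos, ha_pos] with x h1 h2
    rw [ne_eq, ENNReal.ofReal_eq_zero, not_le]
    exact mul_pos h1 (Real.rpow_pos_of_pos h2 _)
  have hVm : ∀ ε : ℝ, Measurable fun x => ENNReal.ofReal (w x * a x ^ ε) := fun ε =>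
    (hw_meas.mul (ha_meas.pow_const ε)).ennreal_ofReal
  have hac' : ∀ ε, volume.restrict Ω ≪ wMeas w a Ω ε := fun ε =>
    withDensity_absolutelyContinuous' (hVm ε).aemeasurable (ae_restrict_of_ae (hVpos ε))
  -- Each term of the supremum is controlled by the grand norm.
  have hterm : ∀ ε ∈ Set.Ioo (0 : ℝ) (q - 1), ∀ (f : EuclideanSpace ℝ (Fin n) → ℝ)
      (g : EuclideanSpace ℝ (Fin n) → EuclideanSpace ℝ (Fin n)),
      eLpNorm f (ENNReal.ofReal (q - ε)) (wMeas w a Ω ε) ≤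
        grandSobNormW q w a Ω f g / ENNReal.ofReal (ε ^ (1 / (q - ε))) ∧
      eLpNorm g (ENNReal.ofReal (q - ε)) (wMeas w a Ω ε) ≤
        grandSobNormW q w a Ω f g / ENNReal.ofReal (ε ^ (1 / (q - ε))) := by
    intro ε hε f g
    have h1 : ENNReal.ofReal (ε ^ (1 / (q - ε))) *
        (eLpNorm f (ENNReal.ofReal (q - ε)) (wMeas w a Ω ε)
          + eLpNorm g (ENNReal.ofReal (q - ε)) (wMeas w a Ω ε)) ≤ grandSobNormW q w a Ω f g := by
      rw [grandSobNormW_eq hw_meas ha_meas]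
      exact le_iSup₂ (f := fun (ε : ℝ) (_ : ε ∈ Set.Ioo (0 : ℝ) (q - 1)) =>
        ENNReal.ofReal (ε ^ (1 / (q - ε))) *
        (eLpNorm f (ENNReal.ofReal (q - ε)) (wMeas w a Ω ε)
          + eLpNorm g (ENNReal.ofReal (q - ε)) (wMeas w a Ω ε))) ε hε
    have h2 : eLpNorm f (ENNReal.ofReal (q - ε)) (wMeas w a Ω ε)
          + eLpNorm g (ENNReal.ofReal (q - ε)) (wMeas w a Ω ε) ≤
        grandSobNormW q w a Ω f g / ENNReal.ofReal (ε ^ (1 / (q - ε))) := by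
      rw [ENNReal.le_div_iff_mul_le (Or.inl (hc0 ε hε)) (Or.inl ENNReal.ofReal_ne_top), mul_comm]
      exact h1
    exact ⟨le_trans le_self_add h2, le_trans le_add_self h2⟩
  have hFm : ∀ k, AEStronglyMeasurable (F k) (volume.restrict Ω) := fun k =>
    (hFG k).1.aestronglyMeasurable
  have hGm : ∀ k, AEStronglyMeasurable (G k) (volume.restrict Ω) := fun k =>
    (hFG k).2.1.aestronglyMeasurable
  obtain ⟨ε₀, hε₀, hdual⟩ :=
    exists_dual_integrable hq hw_meas hw_pos ha_meas ha_pos hδ hw haδ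
  set c₀ := ENNReal.ofReal (ε₀ ^ (1 / (q - ε₀))) with hc₀
  -- A rapidly Cauchy subsequence `F (φ j)`, `G (φ j)` converges almost everywhere.
  choose N hN using fun j : ℕ => hF_cauchy ((1 / 2) ^ j) (by positivity)
  let φ : ℕ → ℕ := fun j => (Finset.range (j + 1)).sup N + j
  have hφN : ∀ i j, i ≤ j → N i ≤ φ j := fun i j hij =>
    le_add_right (Finset.le_sup (f := N) (Finset.mem_range.2 (by omega)))
  have hφ : Filter.Tendsto φ Filter.atTop Filter.atTop :=
    Filter.tendsto_atTop_mono (fun j => Nat.le_add_left j _) Filter.tendsto_id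
  have hB : ∑' j : ℕ, ENNReal.ofReal ((1 / 2) ^ j) / c₀ ≠ ⊤ := by
    simp only [div_eq_mul_inv]
    rw [ENNReal.tsum_mul_right]
    refine ENNReal.mul_ne_top ?_ (ENNReal.inv_ne_top.2 (hc0 ε₀ hε₀))
    simpa [div_eq_mul_inv] using summable_geometric_two.tsum_ofReal_ne_top
  have hrate : ∀ M i j, M ≤ i → M ≤ j →
      grandSobNormW q w a Ω (fun x => F (φ i) x - F (φ j) x) (fun x => G (φ i) x - G (φ j) x) / c₀
        < ENNReal.ofReal ((1 / 2) ^ M) / c₀ := fun M i j hi hj =>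
    ENNReal.div_lt_div_right (hc0 ε₀ hε₀) ENNReal.ofReal_ne_top
      (hN M _ (hφN M i hi) _ (hφN M j hj))
  obtain ⟨f, hfm, hflim⟩ := exists_ae_limit (hac' ε₀) (hac ε₀) (hp1 ε₀ hε₀)
    (fun j => hFm (φ j)) hB
    (fun M i j hi hj => (hterm ε₀ hε₀ _ _).1.trans_lt (hrate M i j hi hj))
  obtain ⟨g, hgm, hglim⟩ := exists_ae_limit (hac' ε₀) (hac ε₀) (hp1 ε₀ hε₀)
    (fun j => hGm (φ j)) hB
    (fun M i j hi hj => (hterm ε₀ hε₀ _ _).2.trans_lt (hrate M i j hi hj))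
  -- The Fatou lemma for every `ε` turns the Cauchy property into convergence in the grand norm.
  have hconv : ∀ δ' : ℝ, 0 < δ' → ∃ N : ℕ, ∀ k ≥ N,
      grandSobNormW q w a Ω (fun x => F k x - f x) (fun x => G k x - g x)
        < ENNReal.ofReal δ' := by
    intro δ' hδ'
    obtain ⟨M, hM⟩ := hF_cauchy (δ' / 4) (by positivity)
    refine ⟨M, fun k hk => ?_⟩
    have hlt : ENNReal.ofReal (δ' / 2) < ENNReal.ofReal δ' :=
      (ENNReal.ofReal_lt_ofReal_iff hδ').2 (by linarith)
    refine lt_of_le_of_lt ?_ hlt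
    rw [grandSobNormW_eq hw_meas ha_meas]
    refine iSup₂_le fun ε hε => ?_
    set c := ENNReal.ofReal (ε ^ (1 / (q - ε))) with hc
    have hev : ∀ᶠ j in Filter.atTop, M ≤ φ j := hφ.eventually_ge_atTop M
    have h1 : eLpNorm (fun x => F k x - f x) (ENNReal.ofReal (q - ε)) (wMeas w a Ω ε)
        ≤ ENNReal.ofReal (δ' / 4) / c := by
      refine eLpNorm_le_of_tendsto (h := fun j x => F k x - F (φ j) x)
        (fun j => ((hFm k).sub (hFm (φ j))).mono_ac (hac ε)) ?_ ?_
      · filter_upwards [(hac ε).ae_le hflim] with x hx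
        exact hx.const_sub _
      · filter_upwards [hev] with j hj
        refine (hterm ε hε _ (fun x => G k x - G (φ j) x)).1.trans ?_
        exact ENNReal.div_le_div_right (hM k hk _ hj).le _
    have h2 : eLpNorm (fun x => G k x - g x) (ENNReal.ofReal (q - ε)) (wMeas w a Ω ε)
        ≤ ENNReal.ofReal (δ' / 4) / c := by
      refine eLpNorm_le_of_tendsto (h := fun j x => G k x - G (φ j) x)
        (fun j => ((hGm k).sub (hGm (φ j))).mono_ac (hac ε)) ?_ ?_
      · filter_upwards [(hac ε).ae_le hglim] with x hx
        exact hx.const_sub _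
      · filter_upwards [hev] with j hj
        refine (hterm ε hε (fun x => F k x - F (φ j) x) _).2.trans ?_
        exact ENNReal.div_le_div_right (hM k hk _ hj).le _
    calc c * (eLpNorm (fun x => F k x - f x) (ENNReal.ofReal (q - ε)) (wMeas w a Ω ε)
          + eLpNorm (fun x => G k x - g x) (ENNReal.ofReal (q - ε)) (wMeas w a Ω ε))
        ≤ c * (ENNReal.ofReal (δ' / 4) / c + ENNReal.ofReal (δ' / 4) / c) := by gcongr
      _ = ENNReal.ofReal (δ' / 4) + ENNReal.ofReal (δ' / 4) := by
          rw [mul_add, ENNReal.mul_div_cancel (hc0 ε hε) ENNReal.ofReal_ne_top]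
      _ = ENNReal.ofReal (δ' / 2) := by
          rw [← ENNReal.ofReal_add (by positivity) (by positivity)]
          congr 1; ring
  have hfin : grandSobNormW q w a Ω f g ≠ ⊤ := by
    obtain ⟨k, hk⟩ := hconv 1 one_pos
    have hk' := hk k le_rfl
    refine ne_top_of_le_ne_top (ENNReal.add_ne_top.2 ⟨hF_mem k, hk'.ne_top⟩) ?_
    conv_lhs => rw [grandSobNormW_eq hw_meas ha_meas]
    refine iSup₂_le fun ε hε => ?_
    have h1 : eLpNorm f (ENNReal.ofReal (q - ε)) (wMeas w a Ω ε) ≤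
        eLpNorm (F k) (ENNReal.ofReal (q - ε)) (wMeas w a Ω ε) +
        eLpNorm (fun x => F k x - f x) (ENNReal.ofReal (q - ε)) (wMeas w a Ω ε) := by
      have := eLpNorm_sub_le (p := ENNReal.ofReal (q - ε)) ((hFm k).mono_ac (hac ε))
        (((hFm k).sub hfm).mono_ac (hac ε)) (hp1 ε hε)
      rwa [_root_.sub_sub_cancel] at this
    have h2 : eLpNorm g (ENNReal.ofReal (q - ε)) (wMeas w a Ω ε) ≤
        eLpNorm (G k) (ENNReal.ofReal (q - ε)) (wMeas w a Ω ε) +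
        eLpNorm (fun x => G k x - g x) (ENNReal.ofReal (q - ε)) (wMeas w a Ω ε) := by
      have := eLpNorm_sub_le (p := ENNReal.ofReal (q - ε)) ((hGm k).mono_ac (hac ε))
        (((hGm k).sub hgm).mono_ac (hac ε)) (hp1 ε hε)
      rwa [_root_.sub_sub_cancel] at this
    refine (mul_le_mul_right (add_le_add h1 h2) _).trans ?_
    rw [add_add_add_comm, mul_add, grandSobNormW_eq hw_meas ha_meas,
      grandSobNormW_eq hw_meas ha_meas]
    exact add_le_add
      (le_iSup₂ (f := fun (ε : ℝ) (_ : ε ∈ Set.Ioo (0 : ℝ) (q - 1)) =>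
        ENNReal.ofReal (ε ^ (1 / (q - ε))) *
        (eLpNorm (F k) (ENNReal.ofReal (q - ε)) (wMeas w a Ω ε)
          + eLpNorm (G k) (ENNReal.ofReal (q - ε)) (wMeas w a Ω ε))) ε hε)
      (le_iSup₂ (f := fun (ε : ℝ) (_ : ε ∈ Set.Ioo (0 : ℝ) (q - 1)) =>
        ENNReal.ofReal (ε ^ (1 / (q - ε))) *
        (eLpNorm (fun x => F k x - f x) (ENNReal.ofReal (q - ε)) (wMeas w a Ω ε)
          + eLpNorm (fun x => G k x - g x) (ENNReal.ofReal (q - ε)) (wMeas w a Ω ε))) ε hε)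
  -- On compact subsets of `Ω` the grand norm controls the `L¹` norm.
  have hloc1 : ∀ K ⊆ Ω, IsCompact K → ∃ C : ℝ≥0∞, C ≠ ⊤ ∧
      ∀ (u : EuclideanSpace ℝ (Fin n) → ℝ)
        (v : EuclideanSpace ℝ (Fin n) → EuclideanSpace ℝ (Fin n)),
        AEStronglyMeasurable u (volume.restrict Ω) → AEStronglyMeasurable v (volume.restrict Ω) →
        ∫⁻ x in K, ‖u x‖ₑ ≤ grandSobNormW q w a Ω u v * C ∧
        ∫⁻ x in K, ‖v x‖ₑ ≤ grandSobNormW q w a Ω u v * C := by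
    intro K hKΩ hK
    have hp : 1 < q - ε₀ := by linarith [hε₀.2]
    set D := (∫⁻ x in K, ENNReal.ofReal (w x * a x ^ ε₀) ^ (-(1 / (q - ε₀ - 1))))
      ^ ((q - ε₀ - 1) / (q - ε₀)) with hD
    have hDt : D ≠ ⊤ := ENNReal.rpow_ne_top_of_nonneg
      (div_nonneg (by linarith) (by linarith)) (hdual K hK.isBounded).ne
    refine ⟨c₀⁻¹ * D, ENNReal.mul_ne_top (ENNReal.inv_ne_top.2 (hc0 ε₀ hε₀)) hDt, ?_⟩
    have key : ∀ h : EuclideanSpace ℝ (Fin n) → ℝ≥0∞, AEMeasurable h (volume.restrict Ω) →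
        ∫⁻ x in K, h x ≤ (∫⁻ x in Ω, h x ^ (q - ε₀) * ENNReal.ofReal (w x * a x ^ ε₀))
          ^ (1 / (q - ε₀)) * D := by
      intro h hh
      refine (lintegral_le_weighted (volume.restrict K) (hh.mono_measure
        (Measure.restrict_mono hKΩ le_rfl)) (hVm ε₀) (ae_restrict_of_ae (hVpos ε₀))
        (by simp) hp).trans ?_
      have : 0 ≤ 1 / (q - ε₀) := one_div_nonneg.2 (by linarith)
      gcongr
    intro u v hu hv
    have hq0 : 0 < q - ε₀ := by linarith
    constructor
    · have h1 := key _ hu.enorm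
      rw [← eLpNorm_wMeas hw_meas ha_meas Ω ε₀ hq0] at h1
      refine h1.trans ?_
      rw [← mul_assoc, ← div_eq_mul_inv]
      gcongr
      exact (hterm ε₀ hε₀ u v).1
    · have h1 := key _ hv.enorm
      rw [← eLpNorm_wMeas hw_meas ha_meas Ω ε₀ hq0] at h1
      refine h1.trans ?_
      rw [← mul_assoc, ← div_eq_mul_inv]
      gcongr
      exact (hterm ε₀ hε₀ u v).2
  have hLC := hΩ.isLocallyClosed
  have hfK : ∀ K ⊆ Ω, IsCompact K → IntegrableOn f K ∧ IntegrableOn g K := by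
    intro K hKΩ hK
    obtain ⟨C, hC, h⟩ := hloc1 K hKΩ hK
    obtain ⟨h1, h2⟩ := h f g hfm hgm
    have hlt := (ENNReal.mul_ne_top hfin hC).lt_top
    exact ⟨⟨hfm.mono_measure (Measure.restrict_mono hKΩ le_rfl), h1.trans_lt hlt⟩,
      ⟨hgm.mono_measure (Measure.restrict_mono hKΩ le_rfl), h2.trans_lt hlt⟩⟩
  have hnorm0 : Filter.Tendsto (fun k => grandSobNormW q w a Ω (fun x => F k x - f x)
      (fun x => G k x - g x)) Filter.atTop (nhds 0) := by
    rw [ENNReal.tendsto_nhds_zero]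
    intro e he
    obtain ⟨δ', h1, h2⟩ := ENNReal.lt_iff_exists_real_btwn.1 he
    have hδ' : 0 < δ' := by simpa using h2.1
    obtain ⟨M, hM⟩ := hconv δ' hδ'
    filter_upwards [Filter.eventually_ge_atTop M] with k hk
    exact (hM k hk).le.trans h2.2.le
  have hlimK : ∀ K ⊆ Ω, IsCompact K →
      Filter.Tendsto (fun k => ∫⁻ x in K, ‖F k x - f x‖ₑ) Filter.atTop (nhds 0) ∧
      Filter.Tendsto (fun k => ∫⁻ x in K, ‖G k x - g x‖ₑ) Filter.atTop (nhds 0) := by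
    intro K hKΩ hK
    obtain ⟨C, hC, h⟩ := hloc1 K hKΩ hK
    have ht := ENNReal.Tendsto.mul_const hnorm0 (b := C) (Or.inr hC)
    rw [zero_mul] at ht
    have h' := fun k => h (fun x => F k x - f x) (fun x => G k x - g x) ((hFm k).sub hfm)
      ((hGm k).sub hgm)
    exact ⟨tendsto_of_tendsto_of_tendsto_of_le_of_le tendsto_const_nhds ht
        (fun k => bot_le) (fun k => (h' k).1),
      tendsto_of_tendsto_of_tendsto_of_le_of_le tendsto_const_nhds ht
        (fun k => bot_le) (fun k => (h' k).2)⟩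
  -- Convergence in `L¹` on compact sets carries the weak gradient identity over to the limit.
  refine ⟨f, g, ⟨(locallyIntegrableOn_iff hLC).2 fun K hKΩ hK => (hfK K hKΩ hK).1,
    (locallyIntegrableOn_iff hLC).2 fun K hKΩ hK => (hfK K hKΩ hK).2, ?_⟩, hfin, hconv⟩
  intro ψ hψ hψc hψΩ i
  have hK : IsCompact (tsupport ψ) := hψc
  have hcoord : ∀ v : EuclideanSpace ℝ (Fin n) → EuclideanSpace ℝ (Fin n),
      IntegrableOn v (tsupport ψ) → IntegrableOn (fun x => v x i) (tsupport ψ) := fun v hv =>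
    (EuclideanSpace.proj (𝕜 := ℝ) i).integrable_comp hv
  have hFK : ∀ k, IntegrableOn (F k) (tsupport ψ) := fun k =>
    (locallyIntegrableOn_iff hLC).1 (hFG k).1 _ hψΩ hK
  have hGK : ∀ k, IntegrableOn (G k) (tsupport ψ) := fun k =>
    (locallyIntegrableOn_iff hLC).1 (hFG k).2.1 _ hψΩ hK
  have ht1 := tendsto_integral_mul_test hΩ.measurableSet hK hψΩ
    (ψ := fun x => fderiv ℝ ψ x (EuclideanSpace.single i 1))
    ((hψ.continuous_fderiv (by simp)).clm_apply continuous_const)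
    (fun x hx => by
      have : fderiv ℝ ψ x = 0 := by
        by_contra hne
        exact hx (support_fderiv_subset ℝ hne)
      simp [this])
    hFK (hfK _ hψΩ hK).1 (hlimK _ hψΩ hK).1
  have ht2 := tendsto_integral_mul_test hΩ.measurableSet hK hψΩ (ψ := ψ) hψ.continuous
    (fun x hx => image_eq_zero_of_notMem_tsupport hx)
    (fun k => hcoord _ (hGK k)) (hcoord _ (hfK _ hψΩ hK).2)
    (tendsto_of_tendsto_of_tendsto_of_le_of_le tendsto_const_nhds (hlimK _ hψΩ hK).2
      (fun k => bot_le) (fun k => lintegral_mono fun x => by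
        rw [← ofReal_norm, ← ofReal_norm]
        exact ENNReal.ofReal_le_ofReal (PiLp.norm_apply_le (G k x - g x) i)))
  refine tendsto_nhds_unique ht1 ?_
  simp only [fun k => (hFG k).2.2 ψ hψ hψc hψΩ i]
  exact ht2.neg
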